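/- Let ε,b > 0 and let c:(−ε,b) → ℝ^{n+2} be smooth with ⟨c(t),c(t)⟩ = 0, c(t) ≠ 0 and ⟨c′(t),c′(t)⟩ = 1 for all t. Let λ ∈ ℝ with 2λ > 1 and fix p ∈ (0,b). Let T:(0,b) → End(ℝ^{n+2}) be differentiable with T(p) = id and T′(t) = (λ/t²)·(T(t)∘(c(t)∧c′(t))), and let ĉ:(0,b) → ℝ^{n+2} be differentiable, nowhere zero, with ⟨ĉ(t),ĉ(t)⟩ = 0 for all t and ĉ′(t) = −(λ/t²)·(⟨c(t),ĉ(t)⟩c′(t) − ⟨c′(t),ĉ(t)⟩c(t)). If ĉ(p) is NOT a projective accumulation point at 0 of the curve t ↦ T(t)(c(t)), then there exist nonzero reals r(t) with r(t)·ĉ(t) → c(0) as t → 0⁺; that is, the λ-Darboux transform converges projectively to ⟨c(0)⟩. -/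

import Mathlib

open scoped BigOperators Topology
open Filter Set MeasureTheory

noncomputable section

abbrev E (n : ℕ) := EuclideanSpace ℝ (Fin (n + 2))

/-- Minkowski inner product of signature (n+1,1). -/
def mink {n : ℕ} (x y : E n) : ℝ :=
  ∑ i, (if i = Fin.last (n + 1) then (-1 : ℝ) else 1) * x i * y i

variable {n : ℕ}

lemma mink_comm (x y : E n) : mink x y = mink y x :=
  Finset.sum_congr rfl fun i _ => by ring

lemma mink_add_right (v x y : E n) : mink v (x + y) = mink v x + mink v y := by
  simp [mink, mul_add, Finset.sum_add_distrib]

lemma mink_smul_right (v : E n) (c : ℝ) (x : E n) : mink v (c • x) = c * mink v x := by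
  unfold mink
  rw [Finset.mul_sum]
  refine Finset.sum_congr rfl fun i _ => ?_
  simp only [PiLp.smul_apply, smul_eq_mul]
  ring

lemma mink_add_left (x y v : E n) : mink (x + y) v = mink x v + mink y v := by
  rw [mink_comm, mink_add_right, mink_comm v x, mink_comm v y]

lemma mink_smul_left (c : ℝ) (x v : E n) : mink (c • x) v = c * mink x v := by
  rw [mink_comm, mink_smul_right, mink_comm v x]

/-- `v ∧ w` as an endomorphism: `x ↦ ⟨v,x⟩ w − ⟨w,x⟩ v`. -/
def wedge {n : ℕ} (v w : E n) : E n →L[ℝ] E n :=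
  LinearMap.toContinuousLinearMap
    { toFun := fun x => mink v x • w - mink w x • v
      map_add' := by
        intro x y
        simp only [mink_add_right, add_smul]
        abel
      map_smul' := by
        intro c x
        simp only [mink_smul_right, RingHom.id_apply, mul_smul, smul_sub] }

/-- rank one endomorphism `vw* : x ↦ ⟨x,w⟩ v`. -/
def rankOne {n : ℕ} (v w : E n) : E n →L[ℝ] E n :=
  LinearMap.toContinuousLinearMap
    { toFun := fun x => mink x w • v
      map_add' := by
        intro x y
        simp only [mink_add_left, add_smul]
      map_smul' := by
        intro c x
        simp only [mink_smul_left, RingHom.id_apply, mul_smul] }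

/-- A nonzero `x` is a projective accumulation point at `0` of a curve
`γ : (0,b) → ℝ^{n+2} ∖ {0}` if some sequence `tᵢ → 0⁺` in `(0,b)` and reals `rᵢ`
satisfy `rᵢ • γ (tᵢ) → x`. -/
def projAccum {n : ℕ} (b : ℝ) (γ : ℝ → E n) (x : E n) : Prop :=
  ∃ (ts : ℕ → ℝ) (rs : ℕ → ℝ), (∀ i, ts i ∈ Set.Ioo (0:ℝ) b) ∧
    Tendsto ts atTop (𝓝 0) ∧ Tendsto (fun i => rs i • γ (ts i)) atTop (𝓝 x)

/-!
Along a parallel null section `v` of the connection of `c`, put `w = ⟨c, v⟩ / t`, `β = ⟨c', v⟩` and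
`h = ⟨v, K⟩` with `K = (λ / t) c - c' + t c''`. Then `t w' = β - w` and `t β' = h + β - 2λ w` hold
exactly, and `h' = t ⟨c''', v⟩ = O(h)` because `⟨K, K⟩ → 1 - 2λ < 0`. Hence `h` converges to some
`h₀`, and so does the oscillator `(w, β)` with frequency `ω = √(2λ - 1)`, after being rotated back
by the angle `-ω log t`, to some `u₀`. These are the components of `v p` in the Minkowski 3-space
whose null lines form the limit circle, and `v p` lies on the limit circle iff `|h₀ / ω| = ‖u₀‖`.

If `|h₀ / ω| ≤ ‖u₀‖`, then `w → 0` along a sequence. Since `T` is an isometry with `T v = v p`, and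
since the time coordinate of `T c` is bounded below by a multiple of `t`, the points `T c` converge
projectively to `v p` along this sequence. Otherwise `⟨c, v⟩ ⟨c'', v⟩` stays above a positive
constant; together with `⟨c, v⟩ = O(t)` and `⟨c'', v⟩ = O(v_last)` this gives
`⟨c, v⟩ / v_last = O(t²)`, so that the null lines of `v` and `c` have the same limit.
-/

open Asymptotics

section MinkowskiSpace

lemma mink_sub_left (x y v : E n) : mink (x - y) v = mink x v - mink y v := by
  rw [sub_eq_add_neg, mink_add_left, ← neg_one_smul ℝ y, mink_smul_left]
  ring

lemma mink_sub_right (v x y : E n) : mink v (x - y) = mink v x - mink v y := by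
  rw [mink_comm, mink_sub_left, mink_comm x, mink_comm y]

lemma tendsto_mink {ι : Type*} {l : Filter ι} {f g : ι → E n} {x y : E n}
    (hf : Tendsto f l (𝓝 x)) (hg : Tendsto g l (𝓝 y)) :
    Tendsto (fun i => mink (f i) (g i)) l (𝓝 (mink x y)) := by
  have coord {k : ι → E n} {z : E n} (hk : Tendsto k l (𝓝 z)) (i : Fin (n + 2)) :
      Tendsto (fun j => k j i) l (𝓝 (z i)) :=
    ((EuclideanSpace.proj (𝕜 := ℝ) i).continuous.tendsto z).comp hk
  exact tendsto_finsetSum _ fun i _ => ((coord hf i).const_mul _).mul (coord hg i)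

lemma hasDerivAt_mink {f g : ℝ → E n} {f' g' : E n} {t : ℝ} (hf : HasDerivAt f f' t)
    (hg : HasDerivAt g g' t) :
    HasDerivAt (fun s => mink (f s) (g s)) (mink f' (g t) + mink (f t) g') t := by
  have coord {k : ℝ → E n} {k' : E n} (hk : HasDerivAt k k' t) (i : Fin (n + 2)) :
      HasDerivAt (fun s => k s i) (k' i) t :=
    (EuclideanSpace.proj (𝕜 := ℝ) i).hasFDerivAt.comp_hasDerivAt t hk
  simp only [mink, ← Finset.sum_add_distrib]
  exact HasDerivAt.fun_sum fun i _ => ((coord hf i).const_mul _).fun_mul (coord hg i)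

/-- The unit vector of the negative direction of the Minkowski product. -/
def timeAxis (n : ℕ) : E n := EuclideanSpace.single (Fin.last (n + 1)) 1

lemma mink_eq_inner_sub (x y : E n) :
    mink x y = inner ℝ x y - 2 * (x (Fin.last _) * y (Fin.last _)) := by
  simp only [mink, PiLp.inner_apply, Fin.sum_univ_castSucc, (Fin.castSucc_lt_last _).ne, if_false,
    if_true, RCLike.inner_apply, conj_trivial, one_mul, mul_comm (y _)]
  ring

lemma mink_self_eq_norm_sq_sub (x : E n) : mink x x = ‖x‖ ^ 2 - 2 * x (Fin.last _) ^ 2 := by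
  rw [mink_eq_inner_sub, real_inner_self_eq_norm_sq]
  ring

lemma mink_timeAxis_right (x : E n) : mink x (timeAxis n) = -x (Fin.last _) := by
  simp [mink_eq_inner_sub, timeAxis, EuclideanSpace.inner_single_right]
  ring

lemma mink_timeAxis_self : mink (timeAxis n) (timeAxis n) = -1 := by
  rw [mink_timeAxis_right]
  simp [timeAxis]

lemma apply_last_ne_zero_of_mink_self_nonpos {x : E n} (hx : mink x x ≤ 0) (h0 : x ≠ 0) :
    x (Fin.last _) ≠ 0 := by
  intro h
  rw [mink_self_eq_norm_sq_sub, h] at hx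
  have := pow_pos (norm_pos_iff.2 h0) 2
  linarith

lemma norm_sub_sq_of_mink_self_eq_zero {x y : E n} (hx : mink x x = 0) (hy : mink y y = 0)
    (h : x (Fin.last _) = y (Fin.last _)) : ‖x - y‖ ^ 2 = -2 * mink x y := by
  have norm_sq_eq : ‖x - y‖ ^ 2 = mink (x - y) (x - y) := by
    rw [mink_self_eq_norm_sq_sub, PiLp.sub_apply, h]
    ring
  rw [norm_sq_eq, mink_sub_left, mink_sub_right, mink_sub_right, hx, hy, mink_comm y x]
  ring

lemma tendsto_smul_of_mink_div_tendsto_zero {ι : Type*} {l : Filter ι} {u z : ι → E n} {z₀ : E n}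
    (hu : ∀ᶠ i in l, mink (u i) (u i) = 0) (hu₀ : ∀ᶠ i in l, u i (Fin.last _) ≠ 0)
    (hz : ∀ᶠ i in l, mink (z i) (z i) = 0) (hz₀ : Tendsto z l (𝓝 z₀))
    (h : Tendsto (fun i => mink (u i) (z i) / u i (Fin.last _)) l (𝓝 0)) :
    Tendsto (fun i => (z i (Fin.last _) / u i (Fin.last _)) • u i) l (𝓝 z₀) := by
  have last_tendsto : Tendsto (fun i => z i (Fin.last _)) l (𝓝 (z₀ (Fin.last _))) :=
    ((EuclideanSpace.proj (𝕜 := ℝ) (Fin.last (n + 1))).continuous.tendsto z₀).comp hz₀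
  have dist_sq_tendsto :
      Tendsto (fun i => ‖(z i (Fin.last _) / u i (Fin.last _)) • u i - z i‖ ^ 2) l (𝓝 0) := by
    have := (last_tendsto.mul h).const_mul (-2)
    rw [mul_zero, mul_zero] at this
    refine this.congr' ?_
    filter_upwards [hu, hu₀, hz] with i hui hu₀i hzi
    rw [norm_sub_sq_of_mink_self_eq_zero (by rw [mink_smul_left, mink_smul_right, hui]; ring) hzi
      (by simp [hu₀i]), mink_smul_left]
    ring
  have sub_tendsto :
      Tendsto (fun i => (z i (Fin.last _) / u i (Fin.last _)) • u i - z i) l (𝓝 0) := by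
    rw [tendsto_zero_iff_norm_tendsto_zero]
    simpa [Real.sqrt_sq] using dist_sq_tendsto.sqrt
  simpa using sub_tendsto.add hz₀

-- The discriminant of `s ↦ ⟨x + sK, x + sK⟩` is nonnegative because the polynomial takes a
-- nonnegative value where the time coordinate of `x + sK` vanishes, while `⟨K, K⟩ < 0`.
lemma mink_self_mul_mink_self_le_sq {K : E n} (hK : mink K K < 0) (x : E n) :
    mink x x * mink K K ≤ mink x K ^ 2 := by
  have K_last : K (Fin.last _) ≠ 0 :=
    apply_last_ne_zero_of_mink_self_nonpos hK.le fun h => by simp [h, mink] at hK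
  set s : ℝ := -(x (Fin.last _) / K (Fin.last _))
  have value_nonneg : 0 ≤ mink (x + s • K) (x + s • K) := by
    have : (x + s • K) (Fin.last _) = 0 := by simp [s, K_last]
    rw [mink_self_eq_norm_sq_sub, this]
    nlinarith [sq_nonneg ‖x + s • K‖]
  simp only [mink_add_left, mink_add_right, mink_smul_left, mink_smul_right,
    mink_comm K x] at value_nonneg
  nlinarith [sq_nonneg (mink x K + s * mink K K)]

-- Cauchy–Schwarz for the positive semidefinite form `2⟨·, K⟩² - ⟨K, K⟩⟨·, ·⟩`, paired with `v` and
-- the reflection of `w` in the hyperplane orthogonal to `K`.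
lemma mink_sq_mul_sq_le {K : E n} (hK : mink K K < 0) (w v : E n) :
    mink w v ^ 2 * mink K K ^ 2 ≤ (2 * mink w K ^ 2 - mink w w * mink K K) *
      (2 * mink v K ^ 2 - mink v v * mink K K) := by
  have form_nonneg (s : ℝ) :
      0 ≤ (2 * mink v K ^ 2 - mink v v * mink K K) * (s * s) +
        2 * (mink w v * mink K K ^ 2) * s +
        mink K K ^ 2 * (2 * mink w K ^ 2 - mink w w * mink K K) := by
    have := mink_self_mul_mink_self_le_sq hK ((2 * mink w K) • K - mink K K • w + s • v)
    simp only [mink_add_left, mink_add_right, mink_sub_left, mink_sub_right, mink_smul_left,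
      mink_smul_right, mink_comm K w, mink_comm K v, mink_comm v w] at this
    nlinarith [sq_nonneg (mink K K * mink w K + s * mink v K)]
  have := discrim_le_zero form_nonneg
  rw [discrim] at this
  have hK2 : 0 < mink K K ^ 2 := sq_pos_of_neg hK
  nlinarith

lemma isBigO_mink_of_mink_self_nonpos {ι : Type*} {l : Filter ι} {K w v : ι → E n} {k : ℝ}
    (hk : k < 0) (hK : Tendsto (fun i => mink (K i) (K i)) l (𝓝 k))
    (hw : (fun i => mink (w i) (w i)) =O[l] fun _ => (1 : ℝ))
    (hwK : (fun i => mink (w i) (K i)) =O[l] fun _ => (1 : ℝ))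
    (hv : ∀ᶠ i in l, mink (v i) (v i) ≤ 0) :
    (fun i => mink (w i) (v i)) =O[l] fun i => mink (v i) (K i) := by
  set q : ι → ℝ := fun i => 2 * mink (w i) (K i) ^ 2 - mink (w i) (w i) * mink (K i) (K i)
  have q_bounded : (fun i => 2 * q i / mink (K i) (K i) ^ 2) =O[l] fun _ => (1 : ℝ) := by
    have hKinv := ((hK.pow 2).inv₀ (pow_ne_zero 2 hk.ne)).isBigO_one ℝ
    simpa [q, div_eq_mul_inv] using
      ((((hwK.pow 2).const_mul_left 2).sub
        (by simpa using hw.mul (hK.isBigO_one ℝ))).const_mul_left 2).mul hKinv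
  have product_isBigO : (fun i => 2 * q i / mink (K i) (K i) ^ 2 * mink (v i) (K i) ^ 2) =O[l]
      fun i => mink (v i) (K i) ^ 2 := by
    simpa using q_bounded.mul (isBigO_refl (fun i => mink (v i) (K i) ^ 2) l)
  refine IsBigO.of_pow two_ne_zero (IsBigO.trans (IsBigO.of_bound 1 ?_) product_isBigO)
  filter_upwards [hK.eventually (gt_mem_nhds hk), hv] with i hKi hvi
  have hK2 : 0 < mink (K i) (K i) ^ 2 := sq_pos_of_neg hKi
  have q_nonneg : 0 ≤ q i := by
    have := mink_self_mul_mink_self_le_sq hKi (w i)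
    simp only [q]
    nlinarith [sq_nonneg (mink (w i) (K i))]
  have cauchy_schwarz : mink (w i) (v i) ^ 2 * mink (K i) (K i) ^ 2 ≤
      q i * (2 * mink (v i) (K i) ^ 2) :=
    (mink_sq_mul_sq_le hKi (w i) (v i)).trans (by gcongr; nlinarith)
  rw [one_mul, Pi.pow_apply, Real.norm_of_nonneg (sq_nonneg _),
    Real.norm_of_nonneg (by positivity), div_mul_eq_mul_div, le_div_iff₀ hK2]
  linarith

end MinkowskiSpace

section ScalarEquations

lemma eventually_nhdsGT_ne (a : ℝ) : ∀ᶠ t in 𝓝[>] a, t ≠ a :=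
  nhdsGT_le_nhdsNE a self_mem_nhdsWithin

lemma eventually_nhdsGT_mem {s : Set ℝ} (hs : IsOpen s) {a : ℝ} (ha : a ∈ s) :
    ∀ᶠ t in 𝓝[>] a, t ∈ s :=
  nhdsWithin_le_nhds (hs.mem_nhds ha)

lemma tendsto_nhdsGT_of_continuousOn {X : Type*} [TopologicalSpace X] {f : ℝ → X} {s : Set ℝ}
    (hf : ContinuousOn f s) (hs : IsOpen s) {a : ℝ} (ha : a ∈ s) :
    Tendsto f (𝓝[>] a) (𝓝 (f a)) :=
  (hf.continuousAt (hs.mem_nhds ha)).tendsto.mono_left nhdsWithin_le_nhds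

lemma exists_tendsto_nhdsGT_of_deriv_isBigO_one {F : Type*} [NormedAddCommGroup F]
    [NormedSpace ℝ F] [CompleteSpace F] {f f' : ℝ → F} {a : ℝ}
    (hf : ∀ᶠ t in 𝓝[>] a, HasDerivAt f (f' t) t) (hf' : f' =O[𝓝[>] a] fun _ => (1 : ℝ)) :
    ∃ L, Tendsto f (𝓝[>] a) (𝓝 L) := by
  obtain ⟨C, hC⟩ := hf'.bound
  obtain ⟨u, hu, hsub⟩ := mem_nhdsGT_iff_exists_Ioo_subset.1 (hf.and hC)
  have lipschitz : LipschitzOnWith C.toNNReal f (Ioo a u) := by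
    refine (convex_Ioo a u).lipschitzOnWith_of_nnnorm_hasDerivWithin_le
      (fun t ht => (hsub ht).1.hasDerivWithinAt) fun t ht => ?_
    rw [← NNReal.coe_le_coe]
    simpa using Or.inl (hsub ht).2
  exact CompleteSpace.complete <| (cauchy_nhds.mono nhdsWithin_le_nhds).map_of_le
    lipschitz.uniformContinuousOn (le_principal_iff.2 (Ioo_mem_nhdsGT hu))

lemma exists_tendsto_nhdsGT_of_deriv_isBigO_self {f f' : ℝ → ℝ} {a : ℝ}
    (hf : ∀ᶠ t in 𝓝[>] a, HasDerivAt f (f' t) t) (hf' : f' =O[𝓝[>] a] f) :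
    ∃ L, Tendsto f (𝓝[>] a) (𝓝 L) := by
  obtain ⟨C, C_nonneg, hC⟩ := hf'.exists_nonneg
  have log_deriv : ∀ᶠ t in 𝓝[>] a,
      HasDerivAt (fun s => Real.log (1 + f s ^ 2)) (2 * f t * f' t / (1 + f t ^ 2)) t := by
    filter_upwards [hf] with t ht
    simpa using ((ht.pow 2).const_add 1).log (by positivity : 1 + f t ^ 2 ≠ 0)
  have log_deriv_bounded :
      (fun t => 2 * f t * f' t / (1 + f t ^ 2)) =O[𝓝[>] a] fun _ => (1 : ℝ) := by
    refine IsBigO.of_bound (2 * C) ?_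
    filter_upwards [hC.bound] with t ht
    have one_add_sq_pos : 0 < 1 + f t ^ 2 := by positivity
    have f_mul_f' : ‖f t‖ * ‖f' t‖ ≤ C * f t ^ 2 := calc
      ‖f t‖ * ‖f' t‖ ≤ ‖f t‖ * (C * ‖f t‖) := by gcongr
      _ = C * f t ^ 2 := by rw [mul_left_comm, ← sq, Real.norm_eq_abs, sq_abs]
    rw [norm_div, norm_mul, norm_mul, Real.norm_of_nonneg one_add_sq_pos.le, norm_one, mul_one,
      Real.norm_two, div_le_iff₀ one_add_sq_pos, mul_assoc, mul_assoc]
    linarith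
  obtain ⟨L, hL⟩ := exists_tendsto_nhdsGT_of_deriv_isBigO_one log_deriv log_deriv_bounded
  have f_bounded : f =O[𝓝[>] a] fun _ => (1 : ℝ) := by
    have exp_bounded : (fun t => Real.exp (Real.log (1 + f t ^ 2))) =O[𝓝[>] a]
        fun _ => (1 : ℝ) ^ 2 := by
      simpa only [one_pow] using hL.rexp.isBigO_one ℝ
    refine IsBigO.of_pow two_ne_zero (IsBigO.trans (IsBigO.of_norm_le fun t => ?_) exp_bounded)
    rw [Real.exp_log (by positivity), Pi.pow_apply, Real.norm_of_nonneg (sq_nonneg _)]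
    exact le_add_of_nonneg_left zero_le_one
  exact exists_tendsto_nhdsGT_of_deriv_isBigO_one hf (hf'.trans f_bounded)

lemma exists_re_exp_mul_I_mul_eq {z : ℂ} {r : ℝ} (hr : |r| ≤ ‖z‖) :
    ∃ θ : ℝ, (Complex.exp (-(θ * Complex.I)) * z).re = r := by
  refine ⟨z.arg - Real.arccos (r / ‖z‖), ?_⟩
  rcases eq_or_ne z 0 with rfl | hz
  · simp_all
  have norm_pos : 0 < ‖z‖ := norm_pos_iff.2 hz
  have polar : Complex.exp (-((z.arg - Real.arccos (r / ‖z‖) : ℝ) * Complex.I)) * z =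
      ‖z‖ * Complex.exp (Real.arccos (r / ‖z‖) * Complex.I) := by
    nth_rw 3 [← Complex.norm_mul_exp_arg_mul_I z]
    rw [mul_left_comm, ← Complex.exp_add]
    congr 2
    push_cast
    ring
  rw [polar, Complex.re_ofReal_mul, Complex.exp_ofReal_mul_I_re, Real.cos_arccos]
  · field_simp
  · rw [le_div_iff₀ norm_pos]; linarith [(abs_le.1 hr).1]
  · rw [div_le_one norm_pos]; exact (abs_le.1 hr).2

/-- The complexified solution of the oscillator `t w' = β - w`, `t β' = h + β - (ω² + 1) w`, rotated
back by the angle `-ω log t` so that it is constant when `h` is. -/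
def eulerPhase (ω : ℝ) (w β h : ℝ → ℝ) (t : ℝ) : ℂ :=
  Complex.exp (ω * Real.log t * Complex.I) * ((ω * w t - h t / ω : ℝ) + (β t - w t : ℝ) * Complex.I)

lemma norm_eulerPhase_sq (ω : ℝ) (w β h : ℝ → ℝ) (t : ℝ) :
    ‖eulerPhase ω w β h t‖ ^ 2 = (ω * w t - h t / ω) ^ 2 + (β t - w t) ^ 2 := by
  have : (ω * Real.log t : ℂ) = (ω * Real.log t : ℝ) := by push_cast; rfl
  rw [eulerPhase, this, norm_mul, Complex.norm_exp_ofReal_mul_I, one_mul, Complex.sq_norm,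
    Complex.normSq_add_mul_I]

lemma hasDerivAt_eulerPhase {ω t h' : ℝ} {w β h : ℝ → ℝ} (hω : ω ≠ 0) (ht : t ≠ 0)
    (hw : HasDerivAt w ((β t - w t) / t) t)
    (hβ : HasDerivAt β ((h t + β t - (ω ^ 2 + 1) * w t) / t) t) (hh : HasDerivAt h h' t) :
    HasDerivAt (eulerPhase ω w β h)
      (-(h' / ω) * Complex.exp (ω * Real.log t * Complex.I)) t := by
  have hexp := (((Real.hasDerivAt_log ht).ofReal_comp.const_mul (ω : ℂ)).mul_const Complex.I).cexp
  have hre := ((hw.const_mul ω).fun_sub (hh.div_const ω)).ofReal_comp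
  have him := ((hβ.fun_sub hw).ofReal_comp).mul_const Complex.I
  refine (hexp.mul (hre.fun_add him)).congr_deriv ?_
  have hω' : (ω : ℂ) ≠ 0 := by exact_mod_cast hω
  have ht' : (t : ℂ) ≠ 0 := by exact_mod_cast ht
  push_cast
  field_simp
  linear_combination (ω ^ 2 * (β t - w t)) * Complex.I_sq

lemma exists_tendsto_eulerPhase {ω : ℝ} {w β h h' : ℝ → ℝ} (hω : ω ≠ 0)
    (hw : ∀ᶠ t in 𝓝[>] 0, HasDerivAt w ((β t - w t) / t) t)
    (hβ : ∀ᶠ t in 𝓝[>] 0, HasDerivAt β ((h t + β t - (ω ^ 2 + 1) * w t) / t) t)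
    (hh : ∀ᶠ t in 𝓝[>] 0, HasDerivAt h (h' t) t) (hh' : h' =O[𝓝[>] 0] fun _ => (1 : ℝ)) :
    ∃ u₀, Tendsto (eulerPhase ω w β h) (𝓝[>] 0) (𝓝 u₀) := by
  have deriv_bounded : (fun t : ℝ => -(h' t / ω : ℂ) * Complex.exp (ω * Real.log t * Complex.I))
      =O[𝓝[>] 0] fun _ => (1 : ℝ) := by
    refine IsBigO.trans (IsBigO.of_bound |ω|⁻¹ (.of_forall fun t => ?_)) hh'
    rw [norm_mul, ← Complex.ofReal_mul, Complex.norm_exp_ofReal_mul_I, norm_neg, norm_div,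
      Complex.norm_real, Complex.norm_real, mul_one, div_eq_inv_mul, Real.norm_eq_abs ω]
  refine exists_tendsto_nhdsGT_of_deriv_isBigO_one ?_ deriv_bounded
  filter_upwards [hw, hβ, hh, eventually_nhdsGT_ne 0] with t hwt hβt hht ht
  exact hasDerivAt_eulerPhase hω ht hwt hβt hht

lemma eq_re_exp_mul_eulerPhase_add {ω : ℝ} (hω : ω ≠ 0) (w β h : ℝ → ℝ) (t : ℝ) :
    w t = ((Complex.exp (-((ω * Real.log t : ℝ) * Complex.I)) * eulerPhase ω w β h t).re +
      h t / ω) / ω := by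
  rw [eulerPhase, ← mul_assoc, ← Complex.exp_add, ← Complex.ofReal_mul, neg_add_cancel,
    Complex.exp_zero, one_mul, Complex.add_re, Complex.re_ofReal_mul, Complex.ofReal_re,
    Complex.I_re]
  field_simp
  ring

lemma isBigO_one_of_tendsto_eulerPhase {ω h₀ : ℝ} {w β h : ℝ → ℝ} {u₀ : ℂ} {l : Filter ℝ}
    (hω : ω ≠ 0) (hu : Tendsto (eulerPhase ω w β h) l (𝓝 u₀)) (hh : Tendsto h l (𝓝 h₀)) :
    w =O[l] fun _ => (1 : ℝ) := by
  have real_part_bounded : (fun t : ℝ =>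
      (Complex.exp (-((ω * Real.log t : ℝ) * Complex.I)) * eulerPhase ω w β h t).re) =O[l]
      fun _ => (1 : ℝ) := by
    refine IsBigO.trans (IsBigO.of_bound 1 (.of_forall fun t => ?_)) (hu.isBigO_one ℝ)
    refine (Complex.abs_re_le_norm _).trans ?_
    rw [norm_mul, ← neg_mul, ← Complex.ofReal_neg, Complex.norm_exp_ofReal_mul_I]
  have := (real_part_bounded.add ((hh.div_const ω).isBigO_one ℝ)).const_mul_left ω⁻¹
  refine this.congr_left fun t => ?_
  rw [eq_re_exp_mul_eulerPhase_add hω w β h t, inv_mul_eq_div]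

-- At the times `exp ((θ - 2πk) / ω)` the rotation of the phase is the constant `exp (-iθ)`, so that
-- `ω w → Re (exp (-iθ) u₀) + h₀ / ω`, and `θ` can be chosen to make this limit zero.
lemma exists_seq_tendsto_zero_of_le_norm {ω h₀ : ℝ} {w β h : ℝ → ℝ} {u₀ : ℂ} (hω : 0 < ω)
    (hu : Tendsto (eulerPhase ω w β h) (𝓝[>] 0) (𝓝 u₀)) (hh : Tendsto h (𝓝[>] 0) (𝓝 h₀))
    (hle : |h₀ / ω| ≤ ‖u₀‖) :
    ∃ ts : ℕ → ℝ, Tendsto ts atTop (𝓝[>] 0) ∧ Tendsto (fun k => w (ts k)) atTop (𝓝 0) := by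
  obtain ⟨θ, hθ⟩ := exists_re_exp_mul_I_mul_eq (z := u₀) (r := -(h₀ / ω)) (by rwa [abs_neg])
  set ts : ℕ → ℝ := fun k => Real.exp ((θ - k * (2 * Real.pi)) / ω)
  have ts_tendsto : Tendsto ts atTop (𝓝[>] 0) := by
    refine Real.tendsto_exp_atBot_nhdsGT.comp (Tendsto.atBot_div_const hω ?_)
    exact tendsto_atBot_add_const_left _ θ (tendsto_neg_atTop_atBot.comp
      (tendsto_natCast_atTop_atTop.atTop_mul_const Real.two_pi_pos))
  have rotation_eq (k : ℕ) : Complex.exp (-((ω * Real.log (ts k) : ℝ) * Complex.I)) =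
      Complex.exp (-(θ * Complex.I)) := by
    rw [Real.log_exp, mul_div_cancel₀ _ hω.ne', ← Complex.exp_periodic.nat_mul k (-(θ * Complex.I))]
    push_cast
    ring_nf
  refine ⟨ts, ts_tendsto, ?_⟩
  have limit := ((Complex.continuous_re.tendsto _).comp
    ((hu.comp ts_tendsto).const_mul (Complex.exp (-(θ * Complex.I))))).add
    ((hh.comp ts_tendsto).div_const ω)
  rw [hθ, neg_add_cancel] at limit
  simpa only [eq_re_exp_mul_eulerPhase_add hω.ne' w β h (ts _), rotation_eq, zero_div,
    Function.comp_def] using limit.div_const ω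

lemma exists_pos_eventually_le_mul_of_norm_lt {ω h₀ : ℝ} {w β h : ℝ → ℝ} {u₀ : ℂ} {l : Filter ℝ}
    (hω : ω ≠ 0) (hu : Tendsto (eulerPhase ω w β h) l (𝓝 u₀)) (hh : Tendsto h l (𝓝 h₀))
    (hlt : ‖u₀‖ < |h₀ / ω|) :
    ∃ η > 0, ∀ᶠ t in l, η ≤ w t * (h t + β t - (ω ^ 2 + 1) / 2 * w t) := by
  have gap_pos : 0 < (h₀ / ω) ^ 2 - ‖u₀‖ ^ 2 :=
    sub_pos.2 (by rw [← sq_abs (h₀ / ω)]; gcongr)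
  have gap_tendsto := ((hh.div_const ω).pow 2).sub (hu.norm.pow 2)
  refine ⟨((h₀ / ω) ^ 2 - ‖u₀‖ ^ 2) / 4, by positivity, ?_⟩
  filter_upwards [gap_tendsto.eventually (lt_mem_nhds (half_lt_self gap_pos))] with t ht
  have gap_eq : (h t / ω) ^ 2 - ‖eulerPhase ω w β h t‖ ^ 2 =
      2 * (w t * (h t + β t - (ω ^ 2 + 1) / 2 * w t)) - β t ^ 2 := by
    rw [norm_eulerPhase_sq]
    field_simp
    ring
  linarith [sq_nonneg (β t)]

end ScalarEquations

section ParallelTransport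

lemma apply_eq_apply_of_hasDerivAt_mul {F : Type*} [NormedAddCommGroup F] [NormedSpace ℝ F]
    {s : Set ℝ} (hs : IsOpen s) (hs' : IsPreconnected s) {T B : ℝ → F →L[ℝ] F} {v : ℝ → F}
    (hT : ∀ t ∈ s, HasDerivAt T (T t * B t) t) (hv : ∀ t ∈ s, HasDerivAt v (-(B t (v t))) t)
    {t p : ℝ} (ht : t ∈ s) (hp : p ∈ s) : T t (v t) = T p (v p) := by
  have deriv_eq_zero (r : ℝ) (hr : r ∈ s) : HasDerivAt (fun q => T q (v q)) 0 r := by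
    simpa using (hT r hr).clm_apply (hv r hr)
  exact hs.is_const_of_deriv_eq_zero hs'
    (fun r hr => (deriv_eq_zero r hr).differentiableAt.differentiableWithinAt)
    (fun r hr => (deriv_eq_zero r hr).deriv) ht hp

/-- The reflection in the hyperplane orthogonal to `timeAxis n`; it relates the Minkowski product to
the Euclidean one. -/
def timeReflection (n : ℕ) : E n →L[ℝ] E n := 1 + (2 : ℝ) • rankOne (timeAxis n) (timeAxis n)

lemma timeReflection_apply (x : E n) :
    timeReflection n x = x + (2 * mink x (timeAxis n)) • timeAxis n := by
  simp [timeReflection, rankOne, mul_smul]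

lemma mink_eq_inner_timeReflection (x y : E n) : mink x y = inner ℝ x (timeReflection n y) := by
  rw [timeReflection_apply, mink_eq_inner_sub, inner_add_right, inner_smul_right,
    mink_timeAxis_right, timeAxis, EuclideanSpace.inner_single_right]
  simp
  ring

lemma timeReflection_timeReflection (x : E n) : timeReflection n (timeReflection n x) = x := by
  simp only [timeReflection_apply, mink_add_left, mink_smul_left, mink_timeAxis_self]
  module

lemma eq_of_forall_mink_eq {x y : E n} (h : ∀ u, mink u x = mink u y) : x = y := by
  simp only [mink_eq_inner_timeReflection] at h
  simpa only [timeReflection_timeReflection] using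
    congrArg (timeReflection n) (ext_inner_left ℝ h)

/-- The adjoint of an endomorphism with respect to the Minkowski product. -/
def minkAdjoint (A : E n →L[ℝ] E n) : E n →L[ℝ] E n :=
  timeReflection n * star A * timeReflection n

lemma mink_minkAdjoint_right (A : E n →L[ℝ] E n) (u x : E n) :
    mink u (minkAdjoint A x) = mink (A u) x := by
  rw [mink_eq_inner_timeReflection, mink_eq_inner_timeReflection]
  simp only [minkAdjoint, mul_apply_eq_comp, timeReflection_timeReflection,
    ContinuousLinearMap.star_eq_adjoint, ContinuousLinearMap.adjoint_inner_right]

lemma hasDerivAt_minkAdjoint_apply {T : ℝ → E n →L[ℝ] E n} {B : E n →L[ℝ] E n} {t : ℝ}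
    (hT : HasDerivAt T (T t * B) t) (hB : ∀ x y, mink (B x) y = -mink x (B y)) (x : E n) :
    HasDerivAt (fun s => minkAdjoint (T s) x) (-(B (minkAdjoint (T t) x))) t := by
  have deriv_adjoint : HasDerivAt (fun s => minkAdjoint (T s)) (minkAdjoint (T t * B)) t :=
    (hT.star.const_mul (timeReflection n)).mul_const (timeReflection n)
  have deriv_apply := deriv_adjoint.clm_apply (hasDerivAt_const t x)
  refine deriv_apply.congr_deriv (eq_of_forall_mink_eq fun u => ?_)
  rw [map_zero, add_zero, mink_minkAdjoint_right, mul_apply_eq_comp,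
    ← mink_minkAdjoint_right, ← neg_one_smul ℝ, mink_smul_right, hB]
  ring

variable {s : Set ℝ} {T B : ℝ → E n →L[ℝ] E n} {p t : ℝ}

lemma apply_minkAdjoint_apply (hs : IsOpen s) (hs' : IsPreconnected s)
    (hT : ∀ t ∈ s, HasDerivAt T (T t * B t) t)
    (hB : ∀ t ∈ s, ∀ x y, mink (B t x) y = -mink x (B t y)) (hp : p ∈ s) (hTp : T p = 1)
    (ht : t ∈ s) (x : E n) : T t (minkAdjoint (T t) x) = x := by
  rw [apply_eq_apply_of_hasDerivAt_mul (v := fun r => minkAdjoint (T r) x) hs hs' hT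
    (fun r hr => hasDerivAt_minkAdjoint_apply (hT r hr) (hB r hr) x) ht hp, hTp]
  exact eq_of_forall_mink_eq fun u => mink_minkAdjoint_right 1 u x

lemma mink_apply_apply (hs : IsOpen s) (hs' : IsPreconnected s)
    (hT : ∀ t ∈ s, HasDerivAt T (T t * B t) t)
    (hB : ∀ t ∈ s, ∀ x y, mink (B t x) y = -mink x (B t y)) (hp : p ∈ s) (hTp : T p = 1)
    (ht : t ∈ s) (x y : E n) : mink (T t x) (T t y) = mink x y := by
  have right_inverse : (T t : E n →ₗ[ℝ] E n) * (minkAdjoint (T t) : E n →ₗ[ℝ] E n) = 1 :=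
    LinearMap.ext fun x => apply_minkAdjoint_apply hs hs' hT hB hp hTp ht x
  have left_inverse : minkAdjoint (T t) (T t y) = y :=
    LinearMap.congr_fun (mul_eq_one_comm.1 right_inverse) y
  rw [← mink_minkAdjoint_right, left_inverse]

lemma mink_wedge_apply_left (a d x y : E n) :
    mink (wedge a d x) y = -mink x (wedge a d y) := by
  simp only [wedge, LinearMap.coe_toContinuousLinearMap', LinearMap.coe_mk, AddHom.coe_mk,
    mink_sub_left, mink_smul_left, mink_comm x]
  ring

end ParallelTransport

section FlatLift

/-- `c` is a flat lift, on the open set `s`, of a curve in the conformal sphere: a curve in the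
light cone parametrized by arc length. It is only asked to be `C³`, as the asymptotics at the pole
involve no higher derivative. -/
structure IsFlatLift (s : Set ℝ) (c : ℝ → E n) : Prop where
  isOpen : IsOpen s
  contDiffOn : ContDiffOn ℝ 3 c s
  mink_self : ∀ t ∈ s, mink (c t) (c t) = 0
  mink_deriv_self : ∀ t ∈ s, mink (deriv c t) (deriv c t) = 1

/-- The connection form along `c` with spectral parameter `lam` and polarization `dt² / t²`. Darboux
transforms are its parallel null sections, Calapso transforms its gauge transformations to the
trivial connection. -/
def curveConnection (lam : ℝ) (c : ℝ → E n) (t : ℝ) : E n →L[ℝ] E n :=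
  (lam / t ^ 2) • wedge (c t) (deriv c t)

/-- A section, parallel for `curveConnection lam c` when `c''' = 0`, whose image under the Calapso
transformation tends to a timelike vector of the three-dimensional space that carries the limit
circle. -/
def limitAxis (lam : ℝ) (c : ℝ → E n) (t : ℝ) : E n :=
  (lam / t) • c t - deriv c t + t • deriv (deriv c) t

lemma curveConnection_apply (lam : ℝ) (c : ℝ → E n) (t : ℝ) (x : E n) :
    curveConnection lam c t x =
      (lam / t ^ 2) • (mink (c t) x • deriv c t - mink (deriv c t) x • c t) := rfl

lemma mink_curveConnection_apply_left (lam : ℝ) (c : ℝ → E n) (t : ℝ) (x y : E n) :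
    mink (curveConnection lam c t x) y = -mink x (curveConnection lam c t y) := by
  simp only [curveConnection, smul_apply, mink_smul_left, mink_smul_right,
    mink_wedge_apply_left, mul_neg]

lemma mul_mink_deriv_deriv_eq (lam : ℝ) (c : ℝ → E n) (t : ℝ) (x : E n) :
    t * mink (deriv (deriv c) t) x =
      mink x (limitAxis lam c t) + mink (deriv c t) x - lam * (mink (c t) x / t) := by
  rw [mink_comm x]
  simp only [limitAxis, mink_add_left, mink_sub_left, mink_smul_left]
  ring

lemma mink_add_mink_eq_zero_of_const {s : Set ℝ} (hs : IsOpen s) {f g : ℝ → E n} {f' g' : E n}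
    {a t : ℝ} (h : ∀ t ∈ s, mink (f t) (g t) = a) (ht : t ∈ s) (hf : HasDerivAt f f' t)
    (hg : HasDerivAt g g' t) : mink f' (g t) + mink (f t) g' = 0 :=
  (hasDerivAt_mink hf hg).unique <|
    (hasDerivAt_const t a).congr_of_eventuallyEq (eventually_of_mem (hs.mem_nhds ht) h)

namespace IsFlatLift

variable {s : Set ℝ} {c v : ℝ → E n} {lam t : ℝ}

lemma contDiffOn_deriv (hc : IsFlatLift s c) : ContDiffOn ℝ 2 (deriv c) s :=
  hc.contDiffOn.deriv_of_isOpen hc.isOpen (by norm_num)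

lemma contDiffOn_deriv_deriv (hc : IsFlatLift s c) : ContDiffOn ℝ 1 (deriv (deriv c)) s :=
  hc.contDiffOn_deriv.deriv_of_isOpen hc.isOpen (by norm_num)

lemma continuousOn_deriv_deriv_deriv (hc : IsFlatLift s c) :
    ContinuousOn (deriv (deriv (deriv c))) s :=
  hc.contDiffOn_deriv_deriv.continuousOn_deriv_of_isOpen hc.isOpen le_rfl

lemma hasDerivAt (hc : IsFlatLift s c) (ht : t ∈ s) : HasDerivAt c (deriv c t) t :=
  ((hc.contDiffOn.contDiffAt (hc.isOpen.mem_nhds ht)).differentiableAt (by norm_num)).hasDerivAt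

lemma hasDerivAt_deriv (hc : IsFlatLift s c) (ht : t ∈ s) :
    HasDerivAt (deriv c) (deriv (deriv c) t) t :=
  ((hc.contDiffOn_deriv.contDiffAt (hc.isOpen.mem_nhds ht)).differentiableAt
    (by norm_num)).hasDerivAt

lemma hasDerivAt_deriv_deriv (hc : IsFlatLift s c) (ht : t ∈ s) :
    HasDerivAt (deriv (deriv c)) (deriv (deriv (deriv c)) t) t :=
  ((hc.contDiffOn_deriv_deriv.contDiffAt (hc.isOpen.mem_nhds ht)).differentiableAt
    (by norm_num)).hasDerivAt

lemma mink_deriv_right (hc : IsFlatLift s c) (ht : t ∈ s) : mink (c t) (deriv c t) = 0 := by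
  have := mink_add_mink_eq_zero_of_const hc.isOpen hc.mink_self ht (hc.hasDerivAt ht)
    (hc.hasDerivAt ht)
  rw [mink_comm (deriv c t)] at this
  linarith

lemma mink_deriv_deriv_right (hc : IsFlatLift s c) (ht : t ∈ s) :
    mink (c t) (deriv (deriv c) t) = -1 := by
  have := mink_add_mink_eq_zero_of_const hc.isOpen (fun _ => hc.mink_deriv_right) ht
    (hc.hasDerivAt ht) (hc.hasDerivAt_deriv ht)
  rw [hc.mink_deriv_self t ht] at this
  linarith

lemma mink_deriv_deriv_deriv (hc : IsFlatLift s c) (ht : t ∈ s) :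
    mink (deriv c t) (deriv (deriv c) t) = 0 := by
  have := mink_add_mink_eq_zero_of_const hc.isOpen hc.mink_deriv_self ht (hc.hasDerivAt_deriv ht)
    (hc.hasDerivAt_deriv ht)
  rw [mink_comm (deriv (deriv c) t)] at this
  linarith

lemma apply_last_ne_zero (hc : IsFlatLift s c) (ht : t ∈ s) : c t (Fin.last _) ≠ 0 :=
  apply_last_ne_zero_of_mink_self_nonpos (hc.mink_self t ht).le fun h => by
    simpa [h, mink] using hc.mink_deriv_deriv_right ht

lemma mink_limitAxis_right (hc : IsFlatLift s c) (ht : t ∈ s) :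
    mink (c t) (limitAxis lam c t) = -t := by
  simp only [limitAxis, mink_add_right, mink_sub_right, mink_smul_right, hc.mink_self t ht,
    hc.mink_deriv_right ht, hc.mink_deriv_deriv_right ht]
  ring

lemma mink_deriv_limitAxis (hc : IsFlatLift s c) (ht : t ∈ s) :
    mink (deriv c t) (limitAxis lam c t) = -1 := by
  simp only [limitAxis, mink_add_right, mink_sub_right, mink_smul_right, mink_comm _ (c t),
    hc.mink_deriv_self t ht, hc.mink_deriv_right ht, hc.mink_deriv_deriv_deriv ht]
  ring

lemma mink_limitAxis_self (hc : IsFlatLift s c) (ht : t ∈ s) (ht₀ : t ≠ 0) :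
    mink (limitAxis lam c t) (limitAxis lam c t) =
      1 - 2 * lam + t ^ 2 * mink (deriv (deriv c) t) (deriv (deriv c) t) := by
  nth_rw 1 [limitAxis]
  simp only [mink_add_left, mink_sub_left, mink_smul_left, hc.mink_limitAxis_right ht,
    hc.mink_deriv_limitAxis ht]
  simp only [limitAxis, mink_add_right, mink_sub_right, mink_smul_right,
    mink_comm _ (c t), mink_comm _ (deriv c t), hc.mink_deriv_deriv_right ht,
    hc.mink_deriv_deriv_deriv ht]
  field_simp
  ring

lemma hasDerivAt_limitAxis (hc : IsFlatLift s c) (ht : t ∈ s) (ht₀ : t ≠ 0) :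
    HasDerivAt (limitAxis lam c) (-(lam / t ^ 2) • c t + (lam / t) • deriv c t +
      t • deriv (deriv (deriv c)) t) t := by
  have inv_deriv : HasDerivAt (fun r => lam / r) (-(lam / t ^ 2)) t := by
    simpa [div_eq_mul_inv] using (hasDerivAt_inv ht₀).const_mul lam
  refine (((inv_deriv.smul (hc.hasDerivAt ht)).sub (hc.hasDerivAt_deriv ht)).add
    ((hasDerivAt_id t).smul (hc.hasDerivAt_deriv_deriv ht))).congr_deriv ?_
  simp only [id_eq]
  module

lemma hasDerivAt_mink_div (hc : IsFlatLift s c) (ht : t ∈ s) (ht₀ : t ≠ 0)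
    (hv : HasDerivAt v (-curveConnection lam c t (v t)) t) :
    HasDerivAt (fun r => mink (c r) (v r) / r)
      ((mink (deriv c t) (v t) - mink (c t) (v t) / t) / t) t := by
  refine ((hasDerivAt_mink (hc.hasDerivAt ht) hv).fun_div (hasDerivAt_id t) ht₀).congr_deriv ?_
  rw [← neg_one_smul ℝ, mink_smul_right, curveConnection_apply, mink_smul_right, mink_sub_right,
    mink_smul_right, mink_smul_right, hc.mink_deriv_right ht, hc.mink_self t ht]
  simp only [id_eq]
  field_simp
  ring

lemma hasDerivAt_mink_deriv (hc : IsFlatLift s c) (ht : t ∈ s) (ht₀ : t ≠ 0)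
    (hv : HasDerivAt v (-curveConnection lam c t (v t)) t) :
    HasDerivAt (fun r => mink (deriv c r) (v r))
      ((mink (v t) (limitAxis lam c t) + mink (deriv c t) (v t) -
        2 * lam * (mink (c t) (v t) / t)) / t) t := by
  refine (hasDerivAt_mink (hc.hasDerivAt_deriv ht) hv).congr_deriv ?_
  rw [← neg_one_smul ℝ, mink_smul_right, curveConnection_apply, mink_smul_right, mink_sub_right,
    mink_smul_right, mink_smul_right, mink_comm _ (c t), hc.mink_deriv_right ht,
    hc.mink_deriv_self t ht, eq_div_iff ht₀]
  have := mul_mink_deriv_deriv_eq lam c t (v t)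
  field_simp at this ⊢
  linear_combination this

lemma hasDerivAt_mink_limitAxis (hc : IsFlatLift s c) (ht : t ∈ s) (ht₀ : t ≠ 0)
    (hv : HasDerivAt v (-curveConnection lam c t (v t)) t) :
    HasDerivAt (fun r => mink (v r) (limitAxis lam c r))
      (t * mink (deriv (deriv (deriv c)) t) (v t)) t := by
  refine (hasDerivAt_mink hv (hc.hasDerivAt_limitAxis ht ht₀)).congr_deriv ?_
  rw [← neg_one_smul ℝ, mink_smul_left, curveConnection_apply, mink_comm (v t)]
  simp only [mink_smul_left, mink_sub_left, mink_add_left, hc.mink_limitAxis_right ht,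
    hc.mink_deriv_limitAxis ht]
  field_simp
  ring

lemma tendsto_deriv_deriv (hc : IsFlatLift s c) (h₀ : 0 ∈ s) :
    Tendsto (deriv (deriv c)) (𝓝[>] 0) (𝓝 (deriv (deriv c) 0)) :=
  tendsto_nhdsGT_of_continuousOn hc.contDiffOn_deriv_deriv.continuousOn hc.isOpen h₀

lemma tendsto_mink_limitAxis_self (hc : IsFlatLift s c) (h₀ : 0 ∈ s) (lam : ℝ) :
    Tendsto (fun t => mink (limitAxis lam c t) (limitAxis lam c t)) (𝓝[>] 0)
      (𝓝 (1 - 2 * lam)) := by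
  have id_tendsto : Tendsto (fun t : ℝ => t) (𝓝[>] 0) (𝓝 0) := nhdsWithin_le_nhds
  have second_tendsto := hc.tendsto_deriv_deriv h₀
  have limit := ((id_tendsto.pow 2).mul (tendsto_mink second_tendsto second_tendsto)).const_add
    (1 - 2 * lam)
  rw [zero_pow two_ne_zero, zero_mul, add_zero] at limit
  refine limit.congr' ?_
  filter_upwards [eventually_nhdsGT_mem hc.isOpen h₀, eventually_nhdsGT_ne 0] with t ht ht₀
  exact (hc.mink_limitAxis_self ht ht₀).symm

lemma isBigO_mul_mink_deriv_deriv_deriv (hc : IsFlatLift s c) (h₀ : 0 ∈ s) (hlam : 1 < 2 * lam)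
    (hv : ∀ᶠ t in 𝓝[>] 0, mink (v t) (v t) ≤ 0) :
    (fun t => t * mink (deriv (deriv (deriv c)) t) (v t)) =O[𝓝[>] 0]
      fun t => mink (v t) (limitAxis lam c t) := by
  have id_tendsto : Tendsto (fun t : ℝ => t) (𝓝[>] 0) (𝓝 0) := nhdsWithin_le_nhds
  have c_tendsto := tendsto_nhdsGT_of_continuousOn hc.contDiffOn.continuousOn hc.isOpen h₀
  have first_tendsto := tendsto_nhdsGT_of_continuousOn hc.contDiffOn_deriv.continuousOn hc.isOpen h₀
  have second_tendsto := hc.tendsto_deriv_deriv h₀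
  have third_tendsto :=
    tendsto_nhdsGT_of_continuousOn hc.continuousOn_deriv_deriv_deriv hc.isOpen h₀
  have scaled_tendsto := id_tendsto.smul third_tendsto
  have mink_limitAxis_tendsto := (((tendsto_mink third_tendsto c_tendsto).const_mul lam).sub
    (id_tendsto.mul (tendsto_mink third_tendsto first_tendsto))).add
    ((id_tendsto.pow 2).mul (tendsto_mink third_tendsto second_tendsto))
  have mink_limitAxis_bounded :
      (fun t => mink (t • deriv (deriv (deriv c)) t) (limitAxis lam c t)) =O[𝓝[>] 0]
        fun _ => (1 : ℝ) := by
    refine (mink_limitAxis_tendsto.isBigO_one ℝ).congr' ?_ .rfl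
    filter_upwards [eventually_nhdsGT_ne 0] with t ht₀
    simp only [limitAxis, mink_smul_left, mink_add_right, mink_sub_right, mink_smul_right]
    field_simp
  simpa only [mink_smul_left] using isBigO_mink_of_mink_self_nonpos (by linarith)
    (hc.tendsto_mink_limitAxis_self h₀ lam)
    ((tendsto_mink scaled_tendsto scaled_tendsto).isBigO_one ℝ) mink_limitAxis_bounded hv

lemma exists_tendsto_mink_limitAxis (hc : IsFlatLift s c) (h₀ : 0 ∈ s) (hlam : 1 < 2 * lam)
    (hv : ∀ᶠ t in 𝓝[>] 0, mink (v t) (v t) ≤ 0)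
    (hv' : ∀ᶠ t in 𝓝[>] 0, HasDerivAt v (-curveConnection lam c t (v t)) t) :
    ∃ h, Tendsto (fun t => mink (v t) (limitAxis lam c t)) (𝓝[>] 0) (𝓝 h) := by
  refine exists_tendsto_nhdsGT_of_deriv_isBigO_self ?_
    (hc.isBigO_mul_mink_deriv_deriv_deriv h₀ hlam hv)
  filter_upwards [eventually_nhdsGT_mem hc.isOpen h₀, eventually_nhdsGT_ne 0, hv'] with t ht ht₀ hvt
  exact hc.hasDerivAt_mink_limitAxis ht ht₀ hvt

lemma exists_tendsto_eulerPhase_mink (hc : IsFlatLift s c) (h₀ : 0 ∈ s) (hlam : 1 < 2 * lam)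
    (hv : ∀ᶠ t in 𝓝[>] 0, mink (v t) (v t) ≤ 0)
    (hv' : ∀ᶠ t in 𝓝[>] 0, HasDerivAt v (-curveConnection lam c t (v t)) t) :
    ∃ u₀, Tendsto (eulerPhase (√(2 * lam - 1)) (fun t => mink (c t) (v t) / t)
      (fun t => mink (deriv c t) (v t)) fun t => mink (v t) (limitAxis lam c t))
      (𝓝[>] 0) (𝓝 u₀) := by
  obtain ⟨h, hh⟩ := hc.exists_tendsto_mink_limitAxis h₀ hlam hv hv'
  have derivs : ∀ᶠ t in 𝓝[>] 0, t ∈ s ∧ t ≠ 0 ∧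
      HasDerivAt v (-curveConnection lam c t (v t)) t :=
    (eventually_nhdsGT_mem hc.isOpen h₀).and ((eventually_nhdsGT_ne 0).and hv')
  have sq_add_one : √(2 * lam - 1) ^ 2 + 1 = 2 * lam := by
    rw [Real.sq_sqrt (by linarith)]
    ring
  refine exists_tendsto_eulerPhase (Real.sqrt_pos.2 (by linarith)).ne'
    (derivs.mono fun t ⟨ht, ht₀, hvt⟩ => hc.hasDerivAt_mink_div ht ht₀ hvt)
    (derivs.mono fun t ⟨ht, ht₀, hvt⟩ => ?_)
    (derivs.mono fun t ⟨ht, ht₀, hvt⟩ => hc.hasDerivAt_mink_limitAxis ht ht₀ hvt)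
    ((hc.isBigO_mul_mink_deriv_deriv_deriv h₀ hlam hv).trans (hh.isBigO_one ℝ))
  rw [sq_add_one]
  exact hc.hasDerivAt_mink_deriv ht ht₀ hvt

lemma isBigO_mink_id (hc : IsFlatLift s c) (h₀ : 0 ∈ s) (hlam : 1 < 2 * lam)
    (hv : ∀ᶠ t in 𝓝[>] 0, mink (v t) (v t) ≤ 0)
    (hv' : ∀ᶠ t in 𝓝[>] 0, HasDerivAt v (-curveConnection lam c t (v t)) t) :
    (fun t => mink (c t) (v t)) =O[𝓝[>] 0] fun t => t := by
  obtain ⟨h, hh⟩ := hc.exists_tendsto_mink_limitAxis h₀ hlam hv hv'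
  obtain ⟨u₀, hu⟩ := hc.exists_tendsto_eulerPhase_mink h₀ hlam hv hv'
  have quotient_bounded := isBigO_one_of_tendsto_eulerPhase
    (Real.sqrt_pos.2 (by linarith)).ne' hu hh
  refine (quotient_bounded.mul (isBigO_refl (fun t : ℝ => t) _)).congr' ?_ (by simp)
  filter_upwards [eventually_nhdsGT_ne 0] with t ht₀
  exact div_mul_cancel₀ _ ht₀

lemma exists_seq_tendsto_zero_or_eventually_le (hc : IsFlatLift s c) (h₀ : 0 ∈ s)
    (hlam : 1 < 2 * lam) (hv : ∀ᶠ t in 𝓝[>] 0, mink (v t) (v t) ≤ 0)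
    (hv' : ∀ᶠ t in 𝓝[>] 0, HasDerivAt v (-curveConnection lam c t (v t)) t) :
    (∃ ts : ℕ → ℝ, Tendsto ts atTop (𝓝[>] 0) ∧
      Tendsto (fun k => mink (c (ts k)) (v (ts k)) / ts k) atTop (𝓝 0)) ∨
    ∃ η > 0, ∀ᶠ t in 𝓝[>] 0, η ≤ mink (c t) (v t) * mink (deriv (deriv c) t) (v t) := by
  obtain ⟨h, hh⟩ := hc.exists_tendsto_mink_limitAxis h₀ hlam hv hv'
  obtain ⟨u₀, hu⟩ := hc.exists_tendsto_eulerPhase_mink h₀ hlam hv hv'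
  have frequency_pos : 0 < √(2 * lam - 1) := Real.sqrt_pos.2 (by linarith)
  rcases le_or_gt |h / √(2 * lam - 1)| ‖u₀‖ with hle | hlt
  · exact .inl (exists_seq_tendsto_zero_of_le_norm frequency_pos hu hh hle)
  obtain ⟨η, η_pos, hη⟩ := exists_pos_eventually_le_mul_of_norm_lt frequency_pos.ne' hu hh hlt
  refine .inr ⟨η, η_pos, ?_⟩
  filter_upwards [hη, eventually_nhdsGT_ne 0] with t ht ht₀
  rw [Real.sq_sqrt (by linarith), sub_add_cancel, mul_div_cancel_left₀ _ two_ne_zero,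
    ← mul_mink_deriv_deriv_eq lam c t (v t)] at ht
  exact ht.trans_eq (by field_simp)

lemma isBigO_id_mink (hc : IsFlatLift s c) (h₀ : 0 ∈ s) (hlam : 1 < 2 * lam)
    (hv : ∀ᶠ t in 𝓝[>] 0, mink (v t) (v t) = -1)
    (hv' : ∀ᶠ t in 𝓝[>] 0, HasDerivAt v (-curveConnection lam c t (v t)) t) :
    (fun t => t) =O[𝓝[>] 0] fun t => mink (c t) (v t) := by
  obtain ⟨h, hh⟩ := hc.exists_tendsto_mink_limitAxis h₀ hlam (hv.mono fun t ht => by linarith) hv'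
  have axis_isBigO := isBigO_mink_of_mink_self_nonpos (K := v) (v := c) neg_one_lt_zero
    (tendsto_const_nhds.congr' (hv.mono fun t ht => ht.symm))
    ((hc.tendsto_mink_limitAxis_self h₀ lam).isBigO_one ℝ)
    ((hh.isBigO_one ℝ).congr_left fun t => mink_comm _ _)
    ((eventually_nhdsGT_mem hc.isOpen h₀).mono fun t ht => (hc.mink_self t ht).le)
  refine (isBigO_neg_left.1 (axis_isBigO.congr' ?_ .rfl))
  filter_upwards [eventually_nhdsGT_mem hc.isOpen h₀] with t ht
  rw [mink_comm, hc.mink_limitAxis_right ht]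

lemma isBigO_mink_deriv_deriv_last (hc : IsFlatLift s c) (h₀ : 0 ∈ s)
    (hv : ∀ᶠ t in 𝓝[>] 0, mink (v t) (v t) ≤ 0) :
    (fun t => mink (deriv (deriv c) t) (v t)) =O[𝓝[>] 0] fun t => v t (Fin.last _) := by
  have second_tendsto := hc.tendsto_deriv_deriv h₀
  have := isBigO_mink_of_mink_self_nonpos (K := fun _ => timeAxis n) neg_one_lt_zero
    (by simp only [mink_timeAxis_self, tendsto_const_nhds])
    ((tendsto_mink second_tendsto second_tendsto).isBigO_one ℝ)
    ((tendsto_mink second_tendsto tendsto_const_nhds).isBigO_one ℝ) hv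
  simpa only [mink_timeAxis_right, isBigO_neg_right] using this

lemma tendsto_mink_div_last_of_eventually_le (hc : IsFlatLift s c) (h₀ : 0 ∈ s)
    (hlam : 1 < 2 * lam) (hv : ∀ᶠ t in 𝓝[>] 0, mink (v t) (v t) ≤ 0)
    (hv₀ : ∀ᶠ t in 𝓝[>] 0, v t ≠ 0)
    (hv' : ∀ᶠ t in 𝓝[>] 0, HasDerivAt v (-curveConnection lam c t (v t)) t) {η : ℝ} (hη : 0 < η)
    (hle : ∀ᶠ t in 𝓝[>] 0, η ≤ mink (c t) (v t) * mink (deriv (deriv c) t) (v t)) :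
    Tendsto (fun t => mink (v t) (c t) / v t (Fin.last _)) (𝓝[>] 0) (𝓝 0) := by
  have one_isBigO : (fun _ => (1 : ℝ)) =O[𝓝[>] 0]
      fun t => mink (c t) (v t) * v t (Fin.last _) := by
    refine IsBigO.trans (IsBigO.of_bound η⁻¹ ?_)
      ((isBigO_refl _ _).mul (hc.isBigO_mink_deriv_deriv_last h₀ hv))
    filter_upwards [hle] with t ht
    rw [norm_one, ← div_eq_inv_mul, one_le_div hη]
    exact ht.trans (Real.le_norm_self _)
  have quotient_isBigO : (fun t => mink (v t) (c t) / v t (Fin.last _)) =O[𝓝[>] 0]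
      fun t => mink (c t) (v t) ^ 2 := by
    refine (one_isBigO.mul (isBigO_refl (fun t => mink (v t) (c t) / v t (Fin.last _)) _)).congr'
      (by simp) ?_
    filter_upwards [hv, hv₀] with t ht ht₀
    have last_ne_zero := apply_last_ne_zero_of_mink_self_nonpos ht ht₀
    rw [mink_comm (v t)]
    field_simp
  refine (quotient_isBigO.trans ((hc.isBigO_mink_id h₀ hlam hv hv').pow 2)).trans_tendsto ?_
  exact ((continuous_pow 2).tendsto' 0 0 (by simp)).mono_left nhdsWithin_le_nhds

lemma tendsto_smul_of_eventually_le (hc : IsFlatLift s c) (h₀ : 0 ∈ s) (hlam : 1 < 2 * lam)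
    (hv : ∀ᶠ t in 𝓝[>] 0, mink (v t) (v t) = 0) (hv₀ : ∀ᶠ t in 𝓝[>] 0, v t ≠ 0)
    (hv' : ∀ᶠ t in 𝓝[>] 0, HasDerivAt v (-curveConnection lam c t (v t)) t) {η : ℝ} (hη : 0 < η)
    (hle : ∀ᶠ t in 𝓝[>] 0, η ≤ mink (c t) (v t) * mink (deriv (deriv c) t) (v t)) :
    Tendsto (fun t => (c t (Fin.last _) / v t (Fin.last _)) • v t) (𝓝[>] 0) (𝓝 (c 0)) := by
  have causal : ∀ᶠ t in 𝓝[>] 0, mink (v t) (v t) ≤ 0 := hv.mono fun t ht => ht.le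
  refine tendsto_smul_of_mink_div_tendsto_zero hv ?_
    ((eventually_nhdsGT_mem hc.isOpen h₀).mono hc.mink_self)
    (tendsto_nhdsGT_of_continuousOn hc.contDiffOn.continuousOn hc.isOpen h₀)
    (hc.tendsto_mink_div_last_of_eventually_le h₀ hlam causal hv₀ hv' hη hle)
  filter_upwards [causal, hv₀] with t ht ht₀
  exact apply_last_ne_zero_of_mink_self_nonpos ht ht₀

section Calapso

variable {b p : ℝ} {T : ℝ → E n →L[ℝ] E n}

lemma isBigO_id_apply_last (hc : IsFlatLift s c) (h₀ : 0 ∈ s) (hlam : 1 < 2 * lam)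
    (hp : p ∈ Ioo 0 b) (hTp : T p = 1)
    (hT : ∀ t ∈ Ioo 0 b, HasDerivAt T (T t * curveConnection lam c t) t) :
    (fun t => t) =O[𝓝[>] 0] fun t => T t (c t) (Fin.last _) := by
  have Ioo_mem : Ioo 0 b ∈ 𝓝[>] (0 : ℝ) := Ioo_mem_nhdsGT (hp.1.trans hp.2)
  have skew (t : ℝ) (_ : t ∈ Ioo 0 b) := mink_curveConnection_apply_left lam c t
  have := hc.isBigO_id_mink (v := fun t => minkAdjoint (T t) (timeAxis n)) h₀ hlam
    (eventually_of_mem Ioo_mem fun t ht => by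
      rw [mink_minkAdjoint_right, apply_minkAdjoint_apply isOpen_Ioo isPreconnected_Ioo hT skew hp
        hTp ht, mink_timeAxis_self])
    (eventually_of_mem Ioo_mem fun t ht => hasDerivAt_minkAdjoint_apply (hT t ht) (skew t ht) _)
  simpa only [mink_minkAdjoint_right, mink_timeAxis_right, isBigO_neg_right] using this

lemma tendsto_smul_apply_of_tendsto_mink_div (hc : IsFlatLift s c) (h₀ : 0 ∈ s)
    (hlam : 1 < 2 * lam) (hp : p ∈ Ioo 0 b) (hTp : T p = 1)
    (hT : ∀ t ∈ Ioo 0 b, HasDerivAt T (T t * curveConnection lam c t) t)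
    (hv : ∀ t ∈ Ioo 0 b, mink (v t) (v t) = 0)
    (hv' : ∀ t ∈ Ioo 0 b, HasDerivAt v (-curveConnection lam c t (v t)) t) {l : Filter ℝ}
    (hl : l ≤ 𝓝[>] 0) (hw : Tendsto (fun t => mink (c t) (v t) / t) l (𝓝 0)) :
    Tendsto (fun t => (v p (Fin.last _) / T t (c t) (Fin.last _)) • T t (c t)) l (𝓝 (v p)) := by
  have Ioo_mem : Ioo 0 b ∈ l := hl (Ioo_mem_nhdsGT (hp.1.trans hp.2))
  have T_mink {t : ℝ} (ht : t ∈ Ioo 0 b) (x y : E n) : mink (T t x) (T t y) = mink x y :=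
    mink_apply_apply isOpen_Ioo isPreconnected_Ioo hT
      (fun t _ => mink_curveConnection_apply_left lam c t) hp hTp ht x y
  have transport {t : ℝ} (ht : t ∈ Ioo 0 b) : T t (v t) = v p := by
    rw [apply_eq_apply_of_hasDerivAt_mul isOpen_Ioo isPreconnected_Ioo hT hv' ht hp, hTp]
    rfl
  have id_isBigO := (hc.isBigO_id_apply_last h₀ hlam hp hTp hT).mono hl
  have id_ne_zero : ∀ᶠ t in l, t ≠ 0 := hl (eventually_nhdsGT_ne 0)
  refine tendsto_smul_of_mink_div_tendsto_zero ?_ ?_ (.of_forall fun _ => hv p hp)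
    tendsto_const_nhds ?_
  · filter_upwards [Ioo_mem, hl (eventually_nhdsGT_mem hc.isOpen h₀)] with t ht hts
    rw [T_mink ht, hc.mink_self t hts]
  · filter_upwards [id_isBigO.eq_zero_imp, id_ne_zero] with t ht ht₀
    exact mt ht ht₀
  · have mink_eq : (fun t => mink (T t (c t)) (v p)) =ᶠ[l] fun t => mink (c t) (v t) := by
      filter_upwards [Ioo_mem] with t ht
      rw [← transport ht, T_mink ht]
    refine IsBigO.trans_tendsto ?_ hw
    simp only [div_eq_mul_inv]
    refine mink_eq.isBigO.mul (id_isBigO.inv_rev ?_)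
    filter_upwards [id_ne_zero] with t ht₀ h
    exact absurd h ht₀

end Calapso

end IsFlatLift

end FlatLift

lemma projAccum_of_tendsto {b : ℝ} (hb : 0 < b) {γ : ℝ → E n} {x : E n} {ts : ℕ → ℝ} {r : ℝ → ℝ}
    (hts : Tendsto ts atTop (𝓝[>] 0))
    (h : Tendsto (fun t => r t • γ t) (map ts atTop) (𝓝 x)) : projAccum b γ x := by
  obtain ⟨N, hN⟩ := eventually_atTop.1 (hts.eventually (Ioo_mem_nhdsGT hb))
  have shift : Tendsto (fun i => ts (i + N)) atTop (map ts atTop) :=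
    tendsto_map.comp (tendsto_add_atTop_nat N)
  exact ⟨fun i => ts (i + N), fun i => r (ts (i + N)), fun i => hN _ (Nat.le_add_left N i),
    shift.mono_right (hts.trans nhdsWithin_le_nhds), h.comp shift⟩

theorem stmt18_general {n : ℕ} (ε b : ℝ) (hε : 0 < ε)
    (c : ℝ → E n) (hc : ContDiffOn ℝ 3 c (Set.Ioo (-ε) b))
    (hcnull : ∀ t ∈ Set.Ioo (-ε) b, mink (c t) (c t) = 0)
    (hcreg : ∀ t ∈ Set.Ioo (-ε) b, mink (deriv c t) (deriv c t) = 1)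
    (lam : ℝ) (hlam : 1 < 2 * lam)
    (p : ℝ) (hp : p ∈ Set.Ioo (0 : ℝ) b)
    (T : ℝ → E n →L[ℝ] E n) (hTp : T p = 1)
    (hT : ∀ t ∈ Set.Ioo (0 : ℝ) b,
      HasDerivAt T ((lam / t ^ 2) • (T t * wedge (c t) (deriv c t))) t)
    (ch : ℝ → E n)
    (hchne : ∀ t ∈ Set.Ioo (0 : ℝ) b, ch t ≠ 0)
    (hchnull : ∀ t ∈ Set.Ioo (0 : ℝ) b, mink (ch t) (ch t) = 0)
    (hch : ∀ t ∈ Set.Ioo (0 : ℝ) b, HasDerivAt ch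
      ((-(lam / t ^ 2)) •
        (mink (c t) (ch t) • deriv c t - mink (deriv c t) (ch t) • c t)) t)
    (hnot : ¬ projAccum b (fun t => (T t) (c t)) (ch p)) :
    ∃ r : ℝ → ℝ, (∀ t ∈ Set.Ioo (0 : ℝ) b, r t ≠ 0) ∧
      Tendsto (fun t : ℝ => r t • ch t) (𝓝[>] 0) (𝓝 (c 0)) := by
  have lift : IsFlatLift (Ioo (-ε) b) c := ⟨isOpen_Ioo, hc, hcnull, hcreg⟩
  have hb : 0 < b := hp.1.trans hp.2
  have h₀ : 0 ∈ Ioo (-ε) b := ⟨neg_lt_zero.2 hε, hb⟩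
  have Ioo_mem : Ioo 0 b ∈ 𝓝[>] (0 : ℝ) := Ioo_mem_nhdsGT hb
  have calapso (t : ℝ) (ht : t ∈ Ioo 0 b) : HasDerivAt T (T t * curveConnection lam c t) t :=
    (hT t ht).congr_deriv ((T t).comp_smul _ _).symm
  have parallel (t : ℝ) (ht : t ∈ Ioo 0 b) :
      HasDerivAt ch (-curveConnection lam c t (ch t)) t := by
    simpa only [curveConnection_apply, neg_smul] using hch t ht
  have causal := eventually_of_mem Ioo_mem fun t ht => (hchnull t ht).le
  have parallel_near := eventually_of_mem Ioo_mem parallel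
  rcases lift.exists_seq_tendsto_zero_or_eventually_le h₀ hlam causal parallel_near with
    ⟨ts, hts, hw⟩ | ⟨η, η_pos, hη⟩
  · exact absurd (projAccum_of_tendsto hb hts (lift.tendsto_smul_apply_of_tendsto_mink_div h₀ hlam
      hp hTp calapso hchnull parallel hts (tendsto_map'_iff.2 hw))) hnot
  exact ⟨fun t => c t (Fin.last _) / ch t (Fin.last _), fun t ht => div_ne_zero
    (lift.apply_last_ne_zero ⟨(neg_lt_zero.2 hε).trans ht.1, ht.2⟩)
    (apply_last_ne_zero_of_mink_self_nonpos (hchnull t ht).le (hchne t ht)),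
    lift.tendsto_smul_of_eventually_le h₀ hlam (eventually_of_mem Ioo_mem hchnull)
      (eventually_of_mem Ioo_mem hchne) parallel_near η_pos hη⟩

/-- Proposition 5.6: for 1−2λ < 0, a Darboux transform whose initial point
does not lie on the limit circle of the Calapso transform converges to the original
curve. -/
theorem stmt18 {n : ℕ} (ε b : ℝ) (hε : 0 < ε) (hb : 0 < b)
    (c : ℝ → E n) (hc : ContDiffOn ℝ (⊤ : ℕ∞) c (Set.Ioo (-ε) b))
    (hcnull : ∀ t ∈ Set.Ioo (-ε) b, mink (c t) (c t) = 0)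
    (hcne : ∀ t ∈ Set.Ioo (-ε) b, c t ≠ 0)
    (hcreg : ∀ t ∈ Set.Ioo (-ε) b, mink (deriv c t) (deriv c t) = 1)
    (lam : ℝ) (hlam : 1 < 2 * lam)
    (p : ℝ) (hp : p ∈ Set.Ioo (0:ℝ) b)
    (T : ℝ → E n →L[ℝ] E n) (hTp : T p = 1)
    (hT : ∀ t ∈ Set.Ioo (0:ℝ) b,
      HasDerivAt T ((lam / t ^ 2) • (T t * wedge (c t) (deriv c t))) t)
    (ch : ℝ → E n)
    (hchne : ∀ t ∈ Set.Ioo (0:ℝ) b, ch t ≠ 0)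
    (hchnull : ∀ t ∈ Set.Ioo (0:ℝ) b, mink (ch t) (ch t) = 0)
    (hch : ∀ t ∈ Set.Ioo (0:ℝ) b, HasDerivAt ch
      ((-(lam / t ^ 2)) •
        (mink (c t) (ch t) • deriv c t - mink (deriv c t) (ch t) • c t)) t)
    (hnot : ¬ projAccum b (fun t => (T t) (c t)) (ch p)) :
    ∃ r : ℝ → ℝ, (∀ t ∈ Set.Ioo (0:ℝ) b, r t ≠ 0) ∧
      Tendsto (fun t : ℝ => r t • ch t) (𝓝[>] 0) (𝓝 (c 0)) :=
  stmt18_general ε b hε c (contDiffOn_infty.1 hc 3) hcnull hcreg lam hlam p hp T hTp hT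
    ch hchne hchnull hch hnot
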